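/- Let n ≥ 1, let A : ℝ → Matrix (Fin n) (Fin n) ℂ be continuous with trace(A(x)) = 0 for all x ∈ ℝ, and let Y : ℝ → Matrix (Fin n) (Fin n) ℂ be differentiable with Y'(x) = A(x) * Y(x) for all x ∈ ℝ. Then the function x ↦ det(Y(x)) is constant on ℝ. -/

import Mathlib

attribute [local instance] Matrix.normedAddCommGroup Matrix.normedSpace

/-! The determinant is multilinear in the rows, so its derivative in the direction `N` is the sum of
the determinants obtained by replacing one row by the corresponding row of `N`. Cofactor expansion
turns this sum into `tr (N * adj Y)` (Jacobi's formula). For `N = A * Y` it equals `tr A * det Y`,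
since `Y * adj Y = det Y • 1`. -/

open Matrix

/-- The determinant as a continuous multilinear function of the rows. The scalars are restricted
from the entry ring `𝔸` to `𝕜`, the field over which derivatives are taken. -/
def continuousMultilinearDet (𝕜 ι 𝔸 : Type*) [Fintype ι] [DecidableEq ι] [CommSemiring 𝕜]
    [CommRing 𝔸] [Algebra 𝕜 𝔸] [TopologicalSpace 𝔸] [IsTopologicalRing 𝔸] :
    ContinuousMultilinearMap 𝕜 (fun _ : ι ↦ ι → 𝔸) 𝔸 where
  toMultilinearMap := (detRowAlternating (n := ι) (R := 𝔸)).toMultilinearMap.restrictScalars 𝕜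
  cont := continuous_id.matrix_det

variable {ι : Type*} [Fintype ι] [DecidableEq ι]

section Algebra

variable {R : Type*} [CommRing R]

theorem det_updateRow_eq_vecMul_adjugate_apply (M : Matrix ι ι R) (i : ι) (v : ι → R) :
    (M.updateRow i v).det = (v ᵥ* M.adjugate) i := by
  rw [← cramer_transpose_apply, cramer_eq_adjugate_mulVec, ← adjugate_transpose, mulVec_transpose]

theorem sum_det_updateRow_eq_trace_mul_adjugate (M N : Matrix ι ι R) :
    ∑ i, (M.updateRow i (N i)).det = (N * M.adjugate).trace :=
  Finset.sum_congr rfl fun i _ ↦ det_updateRow_eq_vecMul_adjugate_apply M i (N i)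

theorem trace_mul_mul_adjugate (A M : Matrix ι ι R) :
    (A * M * M.adjugate).trace = A.trace * M.det := by
  rw [Matrix.mul_assoc, mul_adjugate, mul_smul_one, trace_smul, smul_eq_mul, mul_comm]

end Algebra

theorem linearDeriv_continuousMultilinearDet {𝕜 𝔸 : Type*} [CommSemiring 𝕜] [CommRing 𝔸]
    [Algebra 𝕜 𝔸] [TopologicalSpace 𝔸] [IsTopologicalRing 𝔸] (M N : ι → ι → 𝔸) :
    (continuousMultilinearDet 𝕜 ι 𝔸).linearDeriv M N = (of N * (of M).adjugate).trace := by
  rw [ContinuousMultilinearMap.linearDeriv_apply]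
  exact sum_det_updateRow_eq_trace_mul_adjugate (of M) (of N)

section Deriv

variable {𝕜 𝔸 : Type*} [NontriviallyNormedField 𝕜] [NormedCommRing 𝔸] [NormedAlgebra 𝕜 𝔸]
  {Y : 𝕜 → Matrix ι ι 𝔸} {x : 𝕜}

theorem hasDerivAt_det {Y' : Matrix ι ι 𝔸} (hY : HasDerivAt Y Y' x) :
    HasDerivAt (fun t ↦ (Y t).det) (Y' * (Y x).adjugate).trace x :=
  (((continuousMultilinearDet 𝕜 ι 𝔸).hasFDerivAt (Y x)).comp_hasDerivAt x hY).congr_deriv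
    (linearDeriv_continuousMultilinearDet (Y x) Y')

theorem hasDerivAt_det_of_hasDerivAt_mul {A : Matrix ι ι 𝔸} (hY : HasDerivAt Y (A * Y x) x) :
    HasDerivAt (fun t ↦ (Y t).det) (A.trace * (Y x).det) x :=
  trace_mul_mul_adjugate A (Y x) ▸ hasDerivAt_det hY

end Deriv

theorem det_const_of_traceless_general {𝕜 𝔸 : Type*} [RCLike 𝕜] [NormedCommRing 𝔸]
    [NormedAlgebra 𝕜 𝔸] (A Y : 𝕜 → Matrix ι ι 𝔸) (htr : ∀ x, (A x).trace = 0)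
    (hY : ∀ x, HasDerivAt Y (A x * Y x) x) (x y : 𝕜) : (Y x).det = (Y y).det := by
  have hdet (t : 𝕜) : HasDerivAt (fun s ↦ (Y s).det) 0 t := by
    simpa only [htr, zero_mul] using hasDerivAt_det_of_hasDerivAt_mul (hY t)
  exact is_const_of_deriv_eq_zero (fun t ↦ (hdet t).differentiableAt) (fun t ↦ (hdet t).deriv) x y

/-- Liouville's formula with a traceless coefficient matrix: if `Y' = A x * Y`
with `A` continuous and `tr (A x) = 0` for all `x`, then `x ↦ det (Y x)` is constant. -/
theorem det_const_of_traceless (n : ℕ) (hn : 1 ≤ n)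
    (A Y : ℝ → Matrix (Fin n) (Fin n) ℂ)
    (hA : Continuous A)
    (htr : ∀ x : ℝ, (A x).trace = 0)
    (hY : ∀ x : ℝ, HasDerivAt Y (A x * Y x) x) :
    ∀ x y : ℝ, (Y x).det = (Y y).det :=
  det_const_of_traceless_general A Y htr hY
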